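/- Let χ be a probability distribution on a finite set A and let 0 < c < 1/2 be a constant. Then there exist γ > 0 and N₀ ∈ ℕ such that for every n ≥ N₀, every m ≥ 1, and every set S ⊆ A^n of cardinality min(2^{⌈H(χ)·n⌉}, |A|^n) consisting of most likely keys (i.e., P_n(x) ≥ P_n(y) for all x ∈ S and y ∉ S), the probability over m i.i.d. samples k_1, …, k_m ← χ^n that at least c·m of them lie in S is at least 1 − e^{−γ·m}. -/

import Mathlib

open scoped Classical

/-!
At most `2 ^ (nH)` words can have probability at least `2 ^ (-nH)`, so a set `S` of `2 ^ ⌈nH⌉` most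
likely words weighs at least as much as all of these together. A word has probability at least
`2 ^ (-nH)` when the sum of the `n` i.i.d. variables `-log₂ P(aᵢ)` does not exceed its mean `nH`. By
the central limit theorem the probability of this tends to `1 / 2`, or is `1` if the variables are
almost surely constant. Hence, for any fixed `q` with `c < q < 1 / 2` and `n` large, each key
independently hits `S` with probability at least `q`, and Hoeffding's inequality applies with
`γ = 2(q - c)²`.
-/

section

open Filter MeasureTheory ProbabilityTheory
open scoped Finset Topology

lemma sum_le_sum_of_card_le_of_forall_notMem_le {ι M : Type*} [AddCommMonoid M]
    [LinearOrder M] [IsOrderedAddMonoid M] {f : ι → M} (hf : ∀ i, 0 ≤ f i)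
    {s t : Finset ι} (hcard : #t ≤ #s) (hs : ∀ i ∈ s, ∀ j ∉ s, f j ≤ f i) :
    ∑ i ∈ t, f i ≤ ∑ i ∈ s, f i := by
  suffices h : ∑ i ∈ t \ s, f i ≤ ∑ i ∈ s \ t, f i by
    rw [← Finset.sum_inter_add_sum_sdiff t s, ← Finset.sum_inter_add_sum_sdiff s t,
      Finset.inter_comm]
    gcongr
  obtain hts | hts := (t \ s).eq_empty_or_nonempty
  · rw [hts, Finset.sum_empty]
    exact Finset.sum_nonneg fun i _ ↦ hf i
  obtain ⟨z, hz, hmax⟩ := Finset.exists_max_image (t \ s) f hts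
  calc ∑ i ∈ t \ s, f i
      ≤ #(t \ s) • f z := Finset.sum_le_card_nsmul _ _ _ hmax
    _ ≤ #(s \ t) • f z :=
        nsmul_le_nsmul_left (hf z) (Finset.card_sdiff_le_card_sdiff_iff.mpr hcard)
    _ ≤ ∑ i ∈ s \ t, f i := Finset.card_nsmul_le_sum _ _ _ fun i hi ↦
        hs i (Finset.mem_sdiff.mp hi).1 z (Finset.mem_sdiff.mp hz).2

lemma measureReal_pi_singleton {ι : Type*} [Fintype ι] {E : ι → Type*}
    [∀ i, MeasurableSpace (E i)] (μ : ∀ i, Measure (E i)) [∀ i, SigmaFinite (μ i)]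
    (x : ∀ i, E i) : (Measure.pi μ).real {x} = ∏ i, (μ i).real {x i} := by
  simp [measureReal_def, Measure.pi_singleton, ENNReal.toReal_prod]

lemma card_mul_le_measureReal {E : Type*} [MeasurableSpace E] [MeasurableSingletonClass E]
    {μ : Measure E} [IsFiniteMeasure μ] {t : ℝ} {s : Finset E} (hs : ∀ x ∈ s, t ≤ μ.real {x}) :
    #s * t ≤ μ.real s := by
  rw [← sum_measureReal_singleton, ← nsmul_eq_mul]
  exact Finset.card_nsmul_le_sum s _ t hs

section Hoeffding

variable {ι : Type*} [Fintype ι]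

lemma measureReal_sum_lt_le_exp_of_mem_Icc {Ω : Type*} [MeasurableSpace Ω] {P : Measure Ω}
    {X : ι → Ω → ℝ} (hindep : iIndepFun X P) (hmeas : ∀ i, AEMeasurable (X i) P)
    {a b : ℝ} (hX : ∀ i, ∀ᵐ ω ∂P, X i ω ∈ Set.Icc a b) {c q : ℝ} (hcq : c ≤ q)
    (hq : ∀ i, q ≤ P[X i]) :
    P.real {ω | ∑ i, X i ω < c * Fintype.card ι} ≤
      Real.exp (-(2 * (q - c) ^ 2 / (b - a) ^ 2) * Fintype.card ι) := by
  have := hindep.isProbabilityMeasure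
  have hsubG (i : ι) : HasSubgaussianMGF (fun ω ↦ -(X i ω - P[X i])) ((‖b - a‖₊ / 2) ^ 2) P :=
    (hasSubgaussianMGF_of_mem_Icc (hmeas i) (hX i)).neg
  have hindep' : iIndepFun (fun i ω ↦ -(X i ω - P[X i])) P :=
    hindep.comp (fun i x ↦ -(x - ∫ ω, X i ω ∂P)) fun i ↦ by fun_prop
  have hdev : {ω | ∑ i, X i ω < c * Fintype.card ι} ⊆
      {ω | (q - c) * Fintype.card ι ≤ ∑ i, -(X i ω - P[X i])} := fun ω hω ↦ by
    have hmean : Fintype.card ι * q ≤ ∑ i, P[X i] := by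
      simpa using Finset.card_nsmul_le_sum Finset.univ _ q fun i _ ↦ hq i
    simp only [Set.mem_ofPred_eq, Finset.sum_neg_distrib, Finset.sum_sub_distrib] at hω ⊢
    linarith
  have hε : 0 ≤ (q - c) * Fintype.card ι := mul_nonneg (sub_nonneg.2 hcq) (Nat.cast_nonneg _)
  refine (measureReal_mono hdev).trans
    ((HasSubgaussianMGF.measure_sum_ge_le_of_iIndepFun hindep' (fun i _ ↦ hsubG i) hε).trans_eq ?_)
  congr 1
  push_cast [Finset.sum_const, Finset.card_univ, nsmul_eq_mul, coe_nnnorm, Real.norm_eq_abs]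
  rw [div_pow, sq_abs]
  obtain hab | hab := eq_or_ne (b - a) 0
  · simp [hab]
  obtain hι | hι := eq_or_ne (Fintype.card ι : ℝ) 0
  · simp [hι]
  field_simp

lemma one_sub_exp_le_measureReal_pi_mul_card_le_card_filter_mem {E : ι → Type*}
    [∀ i, MeasurableSpace (E i)] {μ : ∀ i, Measure (E i)} [∀ i, IsProbabilityMeasure (μ i)]
    {s : ∀ i, Set (E i)} (hs : ∀ i, MeasurableSet (s i)) {c q : ℝ} (hcq : c ≤ q)
    (hq : ∀ i, q ≤ (μ i).real (s i)) :
    1 - Real.exp (-(2 * (q - c) ^ 2) * Fintype.card ι) ≤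
      (Measure.pi μ).real {x | c * Fintype.card ι ≤ (#{i | x i ∈ s i} : ℝ)} := by
  set X : ι → (∀ i, E i) → ℝ := fun i x ↦ (s i).indicator 1 (x i)
  have hind (i : ι) : Measurable ((s i).indicator (1 : E i → ℝ)) :=
    measurable_one.indicator (hs i)
  have hX (i : ι) : Measurable (X i) := (hind i).comp (measurable_pi_apply i)
  have hcount (x : ∀ i, E i) : (#{i | x i ∈ s i} : ℝ) = ∑ i, X i x := by
    simp [X, Set.indicator_apply]
  have hmean (i : ι) : ∫ x, X i x ∂Measure.pi μ = (μ i).real (s i) := by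
    rw [← integral_indicator_one (hs i), ← (measurePreserving_eval μ i).map_eq,
      integral_map (measurable_pi_apply i).aemeasurable (hind i).aestronglyMeasurable]
  have htail := measureReal_sum_lt_le_exp_of_mem_Icc (a := 0) (b := 1)
    (iIndepFun_pi fun i ↦ (hind i).aemeasurable) (fun i ↦ (hX i).aemeasurable)
    (fun i ↦ ae_of_all _ fun x ↦ ⟨Set.indicator_nonneg (by simp) _,
      Set.indicator_le_self' (by simp) _⟩)
    hcq fun i ↦ (hq i).trans_eq (hmean i).symm
  have hmeas : MeasurableSet {x | ∑ i, X i x < c * Fintype.card ι} :=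
    measurableSet_lt (by fun_prop) measurable_const
  have hcompl := probReal_compl_eq_one_sub (μ := Measure.pi μ) hmeas
  simp only [Set.compl_ofPred, not_lt, sub_zero, one_pow, div_one] at hcompl htail
  simp_rw [hcount, hcompl]
  gcongr

end Hoeffding

section CentralLimit

lemma one_half_le_gaussianReal_Iic (m : ℝ) (v : NNReal) :
    1 / 2 ≤ (gaussianReal m v).real (Set.Iic m) := by
  have hsymm : (gaussianReal m v).real (Set.Ici m) = (gaussianReal m v).real (Set.Iic m) := by
    have hrefl : (gaussianReal m v).map (fun x ↦ 2 * m - x) = gaussianReal m v := by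
      rw [gaussianReal_map_const_sub]; ring_nf
    conv_rhs => rw [← hrefl, map_measureReal_apply (by fun_prop) measurableSet_Iic]
    congr 1
    ext x
    simp only [Set.mem_Ici, Set.mem_preimage, Set.mem_Iic]
    constructor <;> intro h <;> linarith
  have hunion : 1 ≤ (gaussianReal m v).real (Set.Iic m) + (gaussianReal m v).real (Set.Ici m) := by
    simpa [Set.Iic_union_Ici] using
      measureReal_union_le (μ := gaussianReal m v) (Set.Iic m) (Set.Ici m)
  linarith

variable {Ω : Type*} [MeasurableSpace Ω] {P : Measure Ω} {X : ℕ → Ω → ℝ}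

lemma eventually_lt_measureReal_sum_range_le_of_variance_ne_zero
    (hX : MemLp (X 0) 2 P) (hindep : iIndepFun X P)
    (hident : ∀ i, IdentDistrib (X i) (X 0) P P) (hvar : Var[X 0; P] ≠ 0)
    {c : ℝ} (hc : c < 1 / 2) :
    ∀ᶠ n : ℕ in atTop, c < P.real {ω | ∑ k ∈ Finset.range n, X k ω ≤ n * P[X 0]} := by
  have := hindep.isProbabilityMeasure
  set v := Var[X 0; P].toNNReal with hv
  have hv0 : v ≠ 0 := by
    simpa [hv] using (variance_nonneg (X 0) P).lt_of_ne' hvar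
  have := nullSingletonClass_gaussianReal (μ := 0) hv0
  have hclt := tendstoInDistribution_inv_sqrt_mul_sum_sub (Y := id) (P' := gaussianReal 0 v)
    HasLaw.id hX hindep hident
  -- The variance being nonzero, the Gaussian does not charge the frontier `{0}` of `Iic 0`.
  have hlim := ProbabilityMeasure.tendsto_measure_of_null_frontier_of_tendsto' hclt.tendsto
    (E := Set.Iic 0) (by simp)
  simp only [ProbabilityMeasure.coe_mk, Measure.map_id] at hlim
  have hlimReal := (ENNReal.tendsto_toReal (measure_ne_top _ _)).comp hlim
  filter_upwards [eventually_gt_atTop 0,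
    hlimReal.eventually_const_lt (hc.trans_le (one_half_le_gaussianReal_Iic 0 v))] with n hn hcn
  rw [Function.comp_apply, Measure.map_apply_of_aemeasurable (hclt.forall_aemeasurable n)
    measurableSet_Iic] at hcn
  refine hcn.trans_eq ?_
  rw [measureReal_def]
  congr 2 with ω
  rw [Set.mem_preimage, Set.mem_Iic, Set.mem_ofPred_eq, inv_mul_le_iff₀ (by positivity), mul_zero,
    sub_nonpos]

lemma eventually_lt_measureReal_sum_range_le
    (hX : MemLp (X 0) 2 P) (hindep : iIndepFun X P)
    (hident : ∀ i, IdentDistrib (X i) (X 0) P P) {c : ℝ} (hc : c < 1 / 2) :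
    ∀ᶠ n : ℕ in atTop, c < P.real {ω | ∑ k ∈ Finset.range n, X k ω ≤ n * P[X 0]} := by
  have := hindep.isProbabilityMeasure
  obtain hvar | hvar := ne_or_eq Var[X 0; P] 0
  · exact eventually_lt_measureReal_sum_range_le_of_variance_ne_zero hX hindep hident hvar hc
  have hconst : ∀ᵐ ω ∂P, ∀ k, X k ω = P[X 0] := by
    refine ae_all_iff.2 fun k ↦ ?_
    have hk := ae_eq_integral_of_variance_eq_zero ((hident k).memLp_iff.2 hX)
      ((hident k).variance_eq.trans hvar)
    rwa [(hident k).integral_eq] at hk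
  refine .of_forall fun n ↦ ?_
  have huniv : {ω | ∑ k ∈ Finset.range n, X k ω ≤ n * P[X 0]} =ᵐ[P] Set.univ := by
    rw [eventuallyEq_univ]
    filter_upwards [hconst] with ω hω
    simp [hω]
  rw [measureReal_congr huniv, probReal_univ]
  linarith

lemma eventually_lt_measureReal_pi_sum_le {E : Type*} [MeasurableSpace E] {μ : Measure E}
    [IsProbabilityMeasure μ] {f : E → ℝ} (hf : Measurable f) (hf2 : MemLp f 2 μ)
    {c : ℝ} (hc : c < 1 / 2) :
    ∀ᶠ n : ℕ in atTop,
      c < (Measure.pi fun _ : Fin n ↦ μ).real {x | ∑ i, f (x i) ≤ n * ∫ a, f a ∂μ} := by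
  set Q : Measure (ℕ → E) := Measure.infinitePi fun _ ↦ μ
  have heval (k : ℕ) : MeasurePreserving (fun ω : ℕ → E ↦ ω k) Q μ :=
    measurePreserving_eval_infinitePi (fun _ ↦ μ) k
  have hlaw (k : ℕ) : HasLaw (fun ω : ℕ → E ↦ f (ω k)) (μ.map f) Q :=
    HasLaw.comp (X := fun ω : ℕ → E ↦ ω k) ⟨hf.aemeasurable, rfl⟩ (heval k).hasLaw
  have hident (k : ℕ) : IdentDistrib (fun ω : ℕ → E ↦ f (ω k)) (fun ω ↦ f (ω 0)) Q Q :=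
    (hlaw k).identDistrib (hlaw 0)
  have hindep : iIndepFun (fun (k : ℕ) (ω : ℕ → E) ↦ f (ω k)) Q :=
    iIndepFun_infinitePi (X := fun _ ↦ f) fun _ ↦ hf
  have hmean : ∫ ω, f (ω 0) ∂Q = ∫ a, f a ∂μ := by
    rw [← (heval 0).map_eq, integral_map (heval 0).measurable.aemeasurable
      hf.aestronglyMeasurable]
  filter_upwards [eventually_lt_measureReal_sum_range_le (hf2.comp_measurePreserving (heval 0))
    hindep hident hc] with n hn
  have hproj : Q.map (fun ω (i : Fin n) ↦ ω i) = Measure.pi fun _ ↦ μ := by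
    rw [Measure.map_infinitePi_infinitePi_of_inj Fin.val_injective, Measure.infinitePi_eq_pi]
  rw [← hproj, map_measureReal_apply (by fun_prop) (measurableSet_le (by fun_prop) (by fun_prop))]
  simpa [Finset.sum_range, hmean] using hn

end CentralLimit

section Typical

variable {A : Type*} [Fintype A] [MeasurableSpace A]

/-- The Shannon entropy, in bits, of a distribution `μ` on a finite type. -/
noncomputable def shannonEntropy (μ : Measure A) : ℝ :=
  -∑ a, μ.real {a} * Real.logb 2 (μ.real {a})

/-- The typical words of length `n` over `A`, for i.i.d. letters of law `μ`. Of the usual two-sided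
condition of typicality only the lower bound `2 ^ (-nH)` on the probability of a word is kept, with
no slack in the exponent. -/
noncomputable def typicalSet (μ : Measure A) (n : ℕ) : Finset (Fin n → A) :=
  {x | 2 ^ (-(shannonEntropy μ * n)) ≤ (Measure.pi fun _ : Fin n ↦ μ).real {x}}

lemma mem_typicalSet_iff_sum_neg_logb_le {μ : Measure A} [IsFiniteMeasure μ] {n : ℕ}
    {x : Fin n → A} (hx : (Measure.pi fun _ : Fin n ↦ μ) {x} ≠ 0) :
    x ∈ typicalSet μ n ↔ ∑ i, -Real.logb 2 (μ.real {x i}) ≤ n * shannonEntropy μ := by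
  have hprod : 0 < ∏ i, μ.real {x i} := by
    rw [← measureReal_pi_singleton]
    exact ENNReal.toReal_pos hx (measure_ne_top _ _)
  have hlogb : Real.logb 2 (∏ i, μ.real {x i}) = ∑ i, Real.logb 2 (μ.real {x i}) :=
    Real.logb_prod _ _ fun i hi ↦ Finset.prod_ne_zero_iff.1 hprod.ne' i hi
  rw [typicalSet, Finset.mem_filter_univ, measureReal_pi_singleton,
    ← Real.le_logb_iff_rpow_le one_lt_two hprod, hlogb, Finset.sum_neg_distrib, neg_le, mul_comm,
    neg_le]

variable [MeasurableSingletonClass A] (μ : Measure A)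

lemma integral_neg_logb_measureReal_singleton [IsFiniteMeasure μ] :
    ∫ a, -Real.logb 2 (μ.real {a}) ∂μ = shannonEntropy μ := by
  simp [integral_fintype .of_finite, shannonEntropy]

variable [IsProbabilityMeasure μ]

lemma card_typicalSet_le (n : ℕ) :
    #(typicalSet μ n) ≤ min (2 ^ ⌈shannonEntropy μ * n⌉₊) (Fintype.card A ^ n) := by
  refine le_min ?_ ((Finset.card_le_univ _).trans_eq (by simp))
  have hmass : #(typicalSet μ n) * (2 : ℝ) ^ (-(shannonEntropy μ * n)) ≤ 1 :=
    (card_mul_le_measureReal fun x hx ↦ (Finset.mem_filter.1 hx).2).trans measureReal_le_one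
  rw [Real.rpow_neg two_pos.le, ← div_eq_mul_inv, div_le_one (by positivity)] at hmass
  exact_mod_cast calc (#(typicalSet μ n) : ℝ)
      ≤ 2 ^ (shannonEntropy μ * n) := hmass
    _ ≤ 2 ^ (⌈shannonEntropy μ * n⌉₊ : ℝ) := by gcongr; exacts [one_le_two, Nat.le_ceil _]
    _ = 2 ^ ⌈shannonEntropy μ * n⌉₊ := Real.rpow_natCast _ _

lemma eventually_lt_measureReal_typicalSet {c : ℝ} (hc : c < 1 / 2) :
    ∀ᶠ n : ℕ in atTop, c < (Measure.pi fun _ : Fin n ↦ μ).real (typicalSet μ n) := by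
  have hclt := eventually_lt_measureReal_pi_sum_le (μ := μ)
    (measurable_of_finite fun a ↦ -Real.logb 2 (μ.real {a})) .of_discrete hc
  filter_upwards [hclt] with n hn
  rw [integral_neg_logb_measureReal_singleton] at hn
  refine hn.trans_le (ENNReal.toReal_mono (measure_ne_top _ _) (measure_mono_ae ?_))
  filter_upwards [ae_iff_of_countable.2 fun _ ↦ id] with x hx hsum
  exact (mem_typicalSet_iff_sum_neg_logb_le hx).2 hsum

lemma measureReal_typicalSet_le_of_forall_notMem_le {n : ℕ} {S : Finset (Fin n → A)}
    (hcard : min (2 ^ ⌈shannonEntropy μ * n⌉₊) (Fintype.card A ^ n) ≤ #S)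
    (hS : ∀ x ∈ S, ∀ y ∉ S, ∏ i, μ.real {y i} ≤ ∏ i, μ.real {x i}) :
    (Measure.pi fun _ : Fin n ↦ μ).real (typicalSet μ n) ≤
      (Measure.pi fun _ : Fin n ↦ μ).real S := by
  simp only [← sum_measureReal_singleton, measureReal_pi_singleton]
  exact sum_le_sum_of_card_le_of_forall_notMem_le (fun x ↦ by positivity)
    ((card_typicalSet_le μ n).trans hcard) hS

end Typical

lemma exists_isProbabilityMeasure_measureReal_singleton_eq {A : Type*} [Fintype A]
    [MeasurableSpace A] [MeasurableSingletonClass A] {P : A → ℝ} (hP : ∀ a, 0 ≤ P a)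
    (hsum : ∑ a, P a = 1) :
    ∃ μ : Measure A, IsProbabilityMeasure μ ∧ ∀ a, μ.real {a} = P a := by
  have hsum' : ∑ a, ENNReal.ofReal (P a) = 1 := by
    rw [← ENNReal.ofReal_sum_of_nonneg fun a _ ↦ hP a, hsum, ENNReal.ofReal_one]
  refine ⟨(PMF.ofFintype _ hsum').toMeasure, inferInstance, fun a ↦ ?_⟩
  rw [measureReal_def, PMF.toMeasure_apply_singleton _ _ (measurableSet_singleton a),
    PMF.ofFintype_apply, ENNReal.toReal_ofReal (hP a)]

end

theorem multikey_guessing_small_fraction_general {A : Type*} [Fintype A]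
    (P : A → ℝ) (hP : ∀ a, 0 ≤ P a) (hsum : ∑ a, P a = 1) (c : ℝ) (hc : c < 1 / 2) :
    ∃ γ > (0 : ℝ), ∃ N₀ : ℕ, ∀ n ≥ N₀, ∀ m : ℕ, ∀ S : Finset (Fin n → A),
        min (2 ^ ⌈(-∑ x, P x * Real.logb 2 (P x)) * n⌉₊) (Fintype.card A ^ n) ≤ S.card →
        (∀ x ∈ S, ∀ y ∉ S, (∏ i, P (y i)) ≤ ∏ i, P (x i)) →
        1 - Real.exp (-γ * m) ≤
          ∑ k ∈ Finset.univ.filter (fun k : Fin m → Fin n → A =>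
              c * m ≤ ((Finset.univ.filter (fun j => k j ∈ S)).card : ℝ)),
            ∏ j, ∏ i, P (k j i) := by
  let _ : MeasurableSpace A := ⊤
  obtain ⟨μ, _, hμ⟩ := exists_isProbabilityMeasure_measureReal_singleton_eq hP hsum
  obtain rfl : (fun a ↦ μ.real {a}) = P := funext hμ
  obtain ⟨q, hcq, hq⟩ := exists_between hc
  obtain ⟨N₀, hN₀⟩ := Filter.eventually_atTop.1 (eventually_lt_measureReal_typicalSet μ hq)
  refine ⟨2 * (q - c) ^ 2, by have := sub_pos.2 hcq; positivity, N₀,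
    fun n hn m S hcard hS ↦ ?_⟩
  have hmass := (hN₀ n hn).le.trans
    (measureReal_typicalSet_le_of_forall_notMem_le μ hcard hS)
  have hcount := one_sub_exp_le_measureReal_pi_mul_card_le_card_filter_mem (ι := Fin m)
    (fun _ ↦ S.measurableSet) hcq.le fun _ ↦ hmass
  simp_rw [← measureReal_pi_singleton, MeasureTheory.sum_measureReal_singleton]
  simpa using hcount

/-- **Multi-key guessing, fraction `c < 1/2`.** Let `χ` be a distribution on a finite
set `A` with pmf `P` and Shannon entropy `H(χ) = −∑ a, P a · log₂ (P a)`, and let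
`0 < c < 1/2`. Then there are `γ > 0` and `N₀` such that for all `n ≥ N₀`, all
`m ≥ 1`, and every set `S ⊆ A^n` of cardinality `min(2^⌈H(χ)·n⌉, |A|^n)` consisting
of most likely keys (i.e. `P_n x ≥ P_n y` for `x ∈ S`, `y ∉ S`), the probability over
`m` i.i.d. samples from `χ^n` that at least `c·m` of them lie in `S` is at least
`1 − e^{−γ·m}`. -/
theorem multikey_guessing_small_fraction {A : Type*} [Fintype A]
    (P : A → ℝ) (hpos : ∀ a, 0 < P a) (hle : ∀ a, P a ≤ 1)
    (hsum : ∑ a, P a = 1)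
    (c : ℝ) (hc0 : 0 < c) (hc : c < 1 / 2) :
    ∃ γ > (0 : ℝ), ∃ N₀ : ℕ, ∀ n ≥ N₀, ∀ m : ℕ, 1 ≤ m →
      ∀ S : Finset (Fin n → A),
        S.card = min (2 ^ ⌈(-∑ x, P x * Real.logb 2 (P x)) * n⌉₊) (Fintype.card A ^ n) →
        (∀ x ∈ S, ∀ y ∉ S, (∏ i, P (y i)) ≤ ∏ i, P (x i)) →
        1 - Real.exp (-γ * m) ≤
          ∑ k ∈ Finset.univ.filter (fun k : Fin m → Fin n → A =>
              c * m ≤ ((Finset.univ.filter (fun j => k j ∈ S)).card : ℝ)),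
            ∏ j, ∏ i, P (k j i) := by
  obtain ⟨γ, hγ, N₀, h⟩ :=
    multikey_guessing_small_fraction_general P (fun a ↦ (hpos a).le) hsum c hc
  exact ⟨γ, hγ, N₀, fun n hn m _ S hcard ↦ h n hn m S hcard.ge⟩
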